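/- arXiv:2003.06338 — 4 statements merged into one kernel-verified Lean document; each statement's English description precedes it below -/
import Mathlib

section
/- For every sequence (ξ_k) of pairwise distinct irrational numbers and every sequence (c_k) of positive real numbers, there exists a bijection φ : ℕ → ℚ such that for every k, the function G_φ(x) = Σ_{n : φ(n) < x} n^(-2) is differentiable at ξ_k with G_φ'(ξ_k) = c_k. -/
noncomputable def Gphi (φ : ℕ+ → ℚ) (x : ℝ) : ℝ :=
  ∑' n : ℕ+, if (φ n : ℝ) < x then 1 / ((n : ℕ) : ℝ) ^ 2 else 0

open Filter Topology

lemma exists_bij (I : ℕ → Set ℚ) (hI : ∀ n, (I n).Infinite) (F : Set ℕ) (hF : F.Infinite)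
    (adm : ℕ → ℚ → Prop) (hadm : ∀ q, ∀ᶠ n in atTop, adm n q) :
    ∃ φ : ℕ → ℚ, Function.Bijective φ ∧ ∀ n, φ n ∈ I n ∨ (n ∈ F ∧ adm n (φ n)) := by
  classical
  obtain ⟨e⟩ : Nonempty (ℕ ≃ ℚ) := ⟨(Denumerable.eqv ℚ).symm⟩
  have hpick : ∀ n (S : Finset ℚ), ∃ q : ℚ, q ∉ S ∧ (q ∈ I n ∨ (n ∈ F ∧ adm n q)) ∧
      (n ∈ F → ∀ m, e m ∉ S → adm n (e m) → e.symm q ≤ m) := by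
    intro n S
    by_cases h : n ∈ F ∧ ∃ m, e m ∉ S ∧ adm n (e m)
    · obtain ⟨hn, hex⟩ := h
      refine ⟨e (Nat.find hex), (Nat.find_spec hex).1, Or.inr ⟨hn, (Nat.find_spec hex).2⟩, ?_⟩
      intro _ m h1 h2
      simpa using Nat.find_min' hex ⟨h1, h2⟩
    · obtain ⟨q, hq, hqS⟩ := (hI n).exists_notMem_finset S
      refine ⟨q, hqS, Or.inl hq, ?_⟩
      intro hn m h1 h2
      exact absurd ⟨hn, m, h1, h2⟩ h
  choose pick hp1 hp2 hp3 using hpick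
  let S : ℕ → Finset ℚ := fun n => Nat.rec ∅ (fun n s => insert (pick n s) s) n
  have hS : ∀ n, S (n+1) = insert (pick n (S n)) (S n) := fun n => rfl
  have hmono : Monotone S := monotone_nat_of_le_succ (fun n => by
    rw [hS]; exact Finset.subset_insert _ _)
  let φ : ℕ → ℚ := fun n => pick n (S n)
  have hmem : ∀ m n, m < n → φ m ∈ S n := by
    intro m n h
    apply hmono (Nat.succ_le_of_lt h)
    rw [Nat.succ_eq_add_one, hS]
    exact Finset.mem_insert_self _ _
  have hS0 : ∀ n q, q ∈ S n → ∃ m, φ m = q := by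
    intro n
    induction n with
    | zero => intro q hq; exact absurd hq (Finset.notMem_empty _)
    | succ n ih =>
      intro q hq
      rw [hS, Finset.mem_insert] at hq
      rcases hq with rfl | hq
      · exact ⟨n, rfl⟩
      · exact ih q hq
  have hinj : Function.Injective φ := by
    intro a b hab
    rcases lt_trichotomy a b with h | h | h
    · have h2 := hmem a b h
      rw [hab] at h2
      exact absurd h2 (hp1 b (S b))
    · exact h
    · have h2 := hmem b a h
      rw [← hab] at h2
      exact absurd h2 (hp1 a (S a))
  refine ⟨φ, ⟨hinj, ?_⟩, fun n => hp2 n (S n)⟩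
  intro q
  by_contra hq
  obtain ⟨N, hN⟩ := eventually_atTop.1 (hadm q)
  have hinf : (F \ Set.Iio N).Infinite := hF.sdiff (Set.finite_Iio N)
  have : ((fun n => e.symm (φ n)) '' (F \ Set.Iio N)).Infinite :=
    hinf.image ((e.symm.injective.comp hinj).injOn)
  apply this
  apply (Set.finite_Iic (e.symm q)).subset
  rintro _ ⟨n, ⟨hnF, hnN⟩, rfl⟩
  apply hp3 n (S n) hnF (e.symm q)
  · simp only [Equiv.apply_symm_apply]
    exact fun h => hq (hS0 _ _ h)
  · simp only [Equiv.apply_symm_apply]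
    exact hN n (by simpa using hnN)

/-- The tail of the series restricted to a class. -/
noncomputable def tailC (w : ℕ → ℝ) (C : Set ℕ) (n : ℕ) : ℝ :=
  ∑' m, (C ∩ Set.Ici n).indicator w m

lemma ind_le {w : ℕ → ℝ} (hw : ∀ n, 0 < w n) (hs : Summable w) {A B : Set ℕ} (h : A ⊆ B) :
    ∑' m, A.indicator w m ≤ ∑' m, B.indicator w m :=
  (hs.indicator A).tsum_le_tsum
    (fun m => Set.indicator_le_indicator_of_subset h (fun n => (hw n).le) m) (hs.indicator B)

lemma ind_union {w : ℕ → ℝ} (hs : Summable w) {A B : Set ℕ} (h : Disjoint A B) :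
    ∑' m, (A ∪ B).indicator w m = ∑' m, A.indicator w m + ∑' m, B.indicator w m := by
  rw [← (hs.indicator A).tsum_add (hs.indicator B)]
  congr 1
  rw [Set.indicator_union_of_disjoint h]

lemma tailC_succ {w : ℕ → ℝ} (hs : Summable w) {C : Set ℕ} {n : ℕ} (hn : n ∈ C) :
    tailC w C n = w n + ∑' m, (C ∩ Set.Ioi n).indicator w m := by
  have : C ∩ Set.Ici n = {n} ∪ (C ∩ Set.Ioi n) := by
    ext m
    simp only [Set.mem_inter_iff, Set.mem_Ici, Set.mem_union, Set.mem_singleton_iff, Set.mem_Ioi]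
    constructor
    · rintro ⟨h1, h2⟩
      rcases h2.eq_or_lt with h | h
      · exact Or.inl h.symm
      · exact Or.inr ⟨h1, h⟩
    · rintro (rfl | ⟨h1, h2⟩)
      · exact ⟨hn, le_refl _⟩
      · exact ⟨h1, h2.le⟩
  unfold tailC
  rw [this, ind_union hs (by simp)]
  congr 1
  rw [tsum_eq_single n]
  · simp
  · intro m hm; simp [hm]

lemma tailC_tendsto {w : ℕ → ℝ} (hw : ∀ n, 0 < w n) (hs : Summable w) {ε : ℝ} (hε : 0 < ε) :
    ∃ N, ∀ n ≥ N, ∀ C : Set ℕ, tailC w C n < ε := by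
  have h := tendsto_sum_nat_add w
  obtain ⟨N, hN⟩ := eventually_atTop.1 (h.eventually_lt_const hε)
  refine ⟨N, fun n hn C => lt_of_le_of_lt ?_ (hN n hn)⟩
  calc tailC w C n ≤ ∑' m, (Set.Ici n).indicator w m := ind_le hw hs Set.inter_subset_right
    _ = ∑' m, w (m + n) := by
      have := (hs.indicator (Set.Ici n)).sum_add_tsum_nat_add n
      rw [← this, Finset.sum_eq_zero, zero_add]
      · congr 1; ext m; simp
      · intro i hi; simp at hi ⊢; omega

lemma lemA {w : ℕ → ℝ} (hw : ∀ n, 0 < w n) (hs : Summable w) {C : Set ℕ} (hC : C.Infinite)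
    (hr : ∀ ε > 0, ∃ N, ∀ n ≥ N, n ∈ C → w n ≤ ε * tailC w C n)
    (t : ℕ → ℝ) (ht : ∃ N, ∀ n ≥ N, n ∈ C → tailC w C n - w n < t n ∧ t n < tailC w C n)
    {ε : ℝ} (hε : 0 < ε) :
    ∃ δ > 0, ∀ s, 0 < s → s < δ → ∀ S : Set ℕ, (∀ n ∈ S, n ∈ C ∧ 0 < t n ∧ t n ≤ s) →
      (∀ n ∈ C, 0 < t n → t n < s → n ∈ S) → |∑' n, S.indicator w n - s| ≤ ε * s := by
  classical
  obtain ⟨N1, h1⟩ := hr (min (ε/2) (1/2)) (by positivity)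
  obtain ⟨N2, h2⟩ := ht
  set N := max N1 N2
  obtain ⟨n1, hn1C, hn1⟩ := hC.exists_gt N
  have hTpos : ∀ n ∈ C, 0 < tailC w C n := by
    intro n hn
    rw [tailC_succ hs hn]
    have : 0 ≤ ∑' m, (C ∩ Set.Ioi n).indicator w m :=
      tsum_nonneg (fun m => Set.indicator_nonneg (fun n _ => (hw n).le) m)
    linarith [hw n]
  have hfin : ∃ δ > 0, ∀ n < N, 0 < t n → δ ≤ t n := by
    have : ∀ᶠ δ : ℝ in 𝓝[>] 0, ∀ n ∈ Set.Iio N, 0 < t n → δ ≤ t n := by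
      rw [Filter.eventually_all_finite (Set.finite_Iio N)]
      intro n _
      by_cases h : 0 < t n
      · have : ∀ᶠ δ : ℝ in 𝓝[>] 0, δ < t n :=
          eventually_nhdsWithin_of_eventually_nhds (eventually_lt_nhds h)
        filter_upwards [this] with δ hδ _ using hδ.le
      · exact Eventually.of_forall (fun δ h' => absurd h' h)
    obtain ⟨δ, hδ, h0⟩ := (this.and self_mem_nhdsWithin).exists
    exact ⟨δ, h0, fun n hn => hδ n hn⟩
  obtain ⟨δ0, hδ0, hfin⟩ := hfin
  refine ⟨min δ0 (tailC w C n1), lt_min hδ0 (hTpos n1 hn1C), ?_⟩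
  intro s hs0 hsδ S hS1 hS2
  have hsδ0 : s < δ0 := hsδ.trans_le (min_le_left _ _)
  have hsT : s < tailC w C n1 := hsδ.trans_le (min_le_right _ _)
  obtain ⟨M, hM⟩ := tailC_tendsto hw hs hs0
  -- maximal n in C with T n > s
  let A : Finset ℕ := (Finset.range M).filter (fun n => n ∈ C ∧ s < tailC w C n)
  have hA : ∀ n, n ∈ A ↔ n ∈ C ∧ s < tailC w C n := by
    intro n
    simp only [A, Finset.mem_filter, Finset.mem_range, and_iff_right_iff_imp]
    rintro ⟨_, h⟩
    by_contra hn
    exact absurd (hM n (not_lt.1 hn) C) (not_lt.2 h.le)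
  have hne : A.Nonempty := ⟨n1, (hA n1).2 ⟨hn1C, hsT⟩⟩
  obtain ⟨p, hpA, hpmax⟩ : ∃ p ∈ A, ∀ n ∈ A, n ≤ p := ⟨A.max' hne, A.max'_mem hne, fun n hn => A.le_max' n hn⟩
  obtain ⟨hpC, hps⟩ := (hA p).1 hpA
  have hpn1 : n1 ≤ p := hpmax n1 ((hA n1).2 ⟨hn1C, hsT⟩)
  have hTp := tailC_succ hs hpC
  set R := ∑' m, (C ∩ Set.Ioi p).indicator w m with hR
  have hRs : R ≤ s := by
    have hex : ∃ m, m ∈ C ∧ p < m := by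
      obtain ⟨m, hm, h⟩ := hC.exists_gt p; exact ⟨m, hm, h⟩
    obtain ⟨hqC, hqp⟩ := Nat.find_spec hex
    set q := Nat.find hex
    have h3 : tailC w C q ≤ s := by
      by_contra h
      have := hpmax q ((hA q).2 ⟨hqC, not_le.1 h⟩)
      omega
    refine le_trans (ind_le hw hs ?_) h3
    rintro m ⟨hm1, hm2⟩
    exact ⟨hm1, Nat.find_min' hex ⟨hm1, hm2⟩⟩
  have hlow : R ≤ ∑' n, S.indicator w n := by
    apply ind_le hw hs
    rintro m ⟨hm1, hm2⟩
    have hm2 : p < m := hm2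
    have h3 : tailC w C m ≤ s := by
      by_contra h
      have := hpmax m ((hA m).2 ⟨hm1, not_le.1 h⟩)
      omega
    have h4 := h2 m (by omega) hm1
    refine hS2 m hm1 ?_ (by linarith)
    have h5 := tailC_succ hs hm1
    have : 0 ≤ ∑' k, (C ∩ Set.Ioi m).indicator w k :=
      tsum_nonneg (fun m => Set.indicator_nonneg (fun n _ => (hw n).le) m)
    linarith
  have hup : ∑' n, S.indicator w n ≤ tailC w C p := by
    apply ind_le hw hs
    intro m hm
    obtain ⟨hmC, hm0, hms⟩ := hS1 m hm
    refine ⟨hmC, ?_⟩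
    by_contra hmp
    have hmp : m < p := by simpa using hmp
    by_cases hmN : m < N
    · have := hfin m hmN hm0
      linarith
    · have h4 := (h2 m (by omega) hmC).1
      rw [tailC_succ hs hmC] at h4
      have : tailC w C p ≤ ∑' k, (C ∩ Set.Ioi m).indicator w k := by
        apply ind_le hw hs
        rintro k ⟨hk1, hk2⟩
        exact ⟨hk1, lt_of_lt_of_le hmp hk2⟩
      linarith
  have h6 := h1 p (by omega) hpC
  have hT0 := hTpos p hpC
  have h7 : w p ≤ ε/2 * tailC w C p := h6.trans (by gcongr; exact min_le_left _ _)
  have h8 : w p ≤ 1/2 * tailC w C p := h6.trans (by gcongr; exact min_le_right _ _)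
  have h9 : tailC w C p ≤ 2 * s := by linarith
  have h10 : w p ≤ ε * s := by nlinarith
  rw [abs_le]
  constructor <;> linarith

lemma lemB {w : ℕ → ℝ} (hs : Summable w) (D : Set ℕ) (d : ℕ → ℝ)
    (hd : ∀ n ∈ D, 0 < d n) (v : ℕ → ℝ) (hv : Summable v)
    (hdv : ∀ᶠ n in atTop, n ∈ D → w n ≤ v n * d n)
    {ε : ℝ} (hε : 0 < ε) :
    ∃ δ > 0, ∀ s, 0 < s → s < δ → ∀ S : Set ℕ, (∀ n ∈ S, n ∈ D ∧ d n ≤ s) →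
      ∑' n, S.indicator w n ≤ ε * s := by
  classical
  have hv' : Summable (fun n => |v n|) := hv.abs
  obtain ⟨N1, hN1⟩ := eventually_atTop.1 hdv
  obtain ⟨N2, hN2⟩ := eventually_atTop.1
    ((tendsto_sum_nat_add (fun n => |v n|)).eventually_lt_const hε)
  set N := max N1 N2
  have hfin : ∃ δ > 0, ∀ n < N, n ∈ D → δ ≤ d n := by
    have : ∀ᶠ δ : ℝ in 𝓝[>] 0, ∀ n ∈ Set.Iio N, n ∈ D → δ ≤ d n := by
      rw [Filter.eventually_all_finite (Set.finite_Iio N)]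
      intro n _
      by_cases h : n ∈ D
      · have : ∀ᶠ δ : ℝ in 𝓝[>] 0, δ < d n :=
          eventually_nhdsWithin_of_eventually_nhds (eventually_lt_nhds (hd n h))
        filter_upwards [this] with δ hδ _ using hδ.le
      · exact Eventually.of_forall (fun δ h' => absurd h' h)
    obtain ⟨δ, hδ, h0⟩ := (this.and self_mem_nhdsWithin).exists
    exact ⟨δ, h0, fun n hn => hδ n hn⟩
  obtain ⟨δ0, hδ0, hfin⟩ := hfin
  refine ⟨δ0, hδ0, fun s hs0 hsδ S hS => ?_⟩
  rw [← (hs.indicator S).sum_add_tsum_nat_add N, Finset.sum_eq_zero, zero_add]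
  · calc ∑' i, S.indicator w (i + N) ≤ ∑' i, |v (i + N)| * s := by
          apply Summable.tsum_le_tsum
          · intro i
            by_cases h : i + N ∈ S
            · rw [Set.indicator_of_mem h]
              obtain ⟨h1, h2⟩ := hS _ h
              have h3 := hN1 (i + N) (by omega) h1
              have h4 := hd _ h1
              calc _ ≤ _ := h3
                _ ≤ |v (i+N)| * d (i+N) := by gcongr; exact le_abs_self _
                _ ≤ _ := by gcongr
            · rw [Set.indicator_of_notMem h]; positivity
          · exact (summable_nat_add_iff N).2 (hs.indicator S)
          · exact ((summable_nat_add_iff N).2 hv').mul_right s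
      _ = (∑' i, |v (i + N)|) * s := tsum_mul_right
      _ ≤ ε * s := by
        gcongr
        exact (hN2 N (by omega)).le
  · intro i hi
    apply Set.indicator_of_notMem
    intro h
    obtain ⟨h1, h2⟩ := hS _ h
    have := hfin i (by simpa using hi) h1
    linarith

lemma lemC {w : ℕ → ℝ} (hw : ∀ n, 0 < w n) (hs : Summable w) {C : Set ℕ} (hC : C.Infinite)
    (hr : ∀ ε > 0, ∃ N, ∀ n ≥ N, n ∈ C → w n ≤ ε * tailC w C n)
    (u : ℕ → ℝ) {c : ℝ} (hc : 0 < c)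
    (ht : ∃ N, ∀ n ≥ N, n ∈ C → tailC w C n - w n < c * u n ∧ c * u n < tailC w C n)
    (v : ℕ → ℝ) (hv : Summable v)
    (hdv : ∀ᶠ n in atTop, n ∉ C → 0 < u n → w n ≤ v n * u n)
    {ε : ℝ} (hε : 0 < ε) :
    ∃ δ > 0, ∀ h, 0 < h → h < δ → ∀ B : Set ℕ, (∀ n ∈ B, 0 < u n ∧ u n ≤ h) →
      (∀ n, 0 < u n → u n < h → n ∈ B) → |∑' n, B.indicator w n - c * h| ≤ ε * h := by
  obtain ⟨δ1, hδ1, h1⟩ := lemA hw hs hC hr (fun n => c * u n) ht (ε := ε / (2 * c)) (by positivity)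
  obtain ⟨δ2, hδ2, h2⟩ := lemB hs {n | n ∉ C ∧ 0 < u n} u (fun n hn => hn.2) v hv
    (hdv.mono fun n hn h => hn h.1 h.2) (ε := ε / 2) (by positivity)
  refine ⟨min (δ1 / c) δ2, by positivity, ?_⟩
  intro h h0 hδ B hB1 hB2
  have ha := h1 (c * h) (by positivity) (by
    have := hδ.trans_le (min_le_left _ _)
    rw [lt_div_iff₀ hc] at this; linarith) (B ∩ C)
    (fun n hn => ⟨hn.2, mul_pos hc (hB1 n hn.1).1, mul_le_mul_of_nonneg_left (hB1 n hn.1).2 hc.le⟩)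
    (fun n hn h3 h4 => ⟨hB2 n (pos_of_mul_pos_right h3 hc.le) (lt_of_mul_lt_mul_left h4 hc.le), hn⟩)
  have hb := h2 h h0 (hδ.trans_le (min_le_right _ _)) (B \ C)
    (fun n hn => ⟨⟨hn.2, (hB1 n hn.1).1⟩, (hB1 n hn.1).2⟩)
  have hb0 : 0 ≤ ∑' n, (B \ C).indicator w n :=
      tsum_nonneg (fun m => Set.indicator_nonneg (fun n _ => (hw n).le) m)
  have hsum : ∑' n, B.indicator w n = ∑' n, (B ∩ C).indicator w n + ∑' n, (B \ C).indicator w n := by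
    rw [← ind_union hs (Set.disjoint_sdiff_right.mono_left Set.inter_subset_right), Set.inter_union_sdiff]
  have he : ε / (2 * c) * (c * h) = ε / 2 * h := by field_simp
  rw [he] at ha
  rw [hsum]
  rw [abs_le] at ha ⊢
  constructor <;> linarith

/-- The distribution function over `ℕ`. -/
noncomputable def GG (w : ℕ → ℝ) (φ : ℕ → ℚ) (x : ℝ) : ℝ :=
  ∑' n, {n | (φ n : ℝ) < x}.indicator w n

lemma GG_diff {w : ℕ → ℝ} (hs : Summable w) (φ : ℕ → ℚ) {x y : ℝ} (h : x ≤ y) :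
    GG w φ y = GG w φ x + ∑' n, {n | x ≤ (φ n : ℝ) ∧ (φ n : ℝ) < y}.indicator w n := by
  unfold GG
  rw [← ind_union hs]
  · have hset : {n | (φ n : ℝ) < y} =
        {n | (φ n : ℝ) < x} ∪ {n | x ≤ (φ n : ℝ) ∧ (φ n : ℝ) < y} := ?_
    · rw [hset]
    ext n
    show (φ n : ℝ) < y ↔ (φ n : ℝ) < x ∨ (x ≤ (φ n : ℝ) ∧ (φ n : ℝ) < y)
    constructor
    · intro h1
      rcases lt_or_ge (φ n : ℝ) x with h2 | h2
      · exact Or.inl h2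
      · exact Or.inr ⟨h2, h1⟩
    · rintro (h1 | h1)
      · exact h1.trans_le h
      · exact h1.2
  · rw [Set.disjoint_left]
    intro n h1 h2
    exact absurd h1 (not_lt.2 h2.1)

lemma deriv_of {w : ℕ → ℝ} (hs : Summable w) (φ : ℕ → ℚ) {ξ c : ℝ} (hξ : Irrational ξ)
    (H : ∀ σ : ℝ, (σ = 1 ∨ σ = -1) → ∀ ε > 0, ∃ δ > 0, ∀ h, 0 < h → h < δ → ∀ B : Set ℕ,
      (∀ n ∈ B, 0 < σ * (φ n - ξ) ∧ σ * (φ n - ξ) ≤ h) →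
      (∀ n, 0 < σ * (φ n - ξ) → σ * (φ n - ξ) < h → n ∈ B) →
        |∑' n, B.indicator w n - c * h| ≤ ε * h) :
    HasDerivAt (GG w φ) c ξ := by
  rw [hasDerivAt_iff_isLittleO, Asymptotics.isLittleO_iff]
  intro ε hε
  obtain ⟨δ1, hδ1, h1⟩ := H 1 (Or.inl rfl) ε hε
  obtain ⟨δ2, hδ2, h2⟩ := H (-1) (Or.inr rfl) ε hε
  filter_upwards [Metric.ball_mem_nhds ξ (lt_min hδ1 hδ2)] with x hx
  rw [Metric.mem_ball, Real.dist_eq, abs_lt] at hx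
  have hx1 := min_le_left δ1 δ2
  have hx2 := min_le_right δ1 δ2
  have hne : ∀ n, (φ n : ℝ) ≠ ξ := fun n => (hξ.ne_rat _).symm
  rcases lt_trichotomy x ξ with hlt | rfl | hgt
  · have := h2 (ξ - x) (by linarith) (by linarith) {n | x ≤ (φ n : ℝ) ∧ (φ n : ℝ) < ξ}
      (fun n hn => ⟨by linarith [hn.2], by linarith [hn.1]⟩)
      (fun n h3 h4 => ⟨by linarith, by linarith⟩)
    rw [GG_diff hs φ hlt.le, Real.norm_eq_abs, Real.norm_eq_abs, abs_of_neg (sub_neg.2 hlt),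
      smul_eq_mul, ← abs_neg]
    convert this using 2 <;> ring
  · simp
  · have := h1 (x - ξ) (by linarith) (by linarith) {n | ξ ≤ (φ n : ℝ) ∧ (φ n : ℝ) < x}
      (fun n hn => ⟨by linarith [lt_of_le_of_ne hn.1 (hne n).symm], by linarith [hn.2]⟩)
      (fun n h3 h4 => ⟨by linarith, by linarith⟩)
    rw [GG_diff hs φ hgt.le, Real.norm_eq_abs, Real.norm_eq_abs, abs_of_pos (sub_pos.2 hgt),
      smul_eq_mul]
    convert this using 2; ring

/-- Dyadic class of an index. -/
def cls (n : ℕ) : ℕ := padicValNat 2 (n + 1)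

lemma cls_eq_iff (n K : ℕ) : cls n = K ↔ 2 ^ K ∣ n + 1 ∧ ¬ 2 ^ (K + 1) ∣ n + 1 := by
  have : Fact (Nat.Prime 2) := ⟨Nat.prime_two⟩
  unfold cls
  rw [padicValNat_dvd_iff_le (by omega), padicValNat_dvd_iff_le (by omega)]
  omega

lemma cls_shift (n i K : ℕ) (h : cls n = K) : cls (n + i * 2 ^ (K + 1)) = K := by
  rw [cls_eq_iff] at h ⊢
  have e : n + i * 2 ^ (K+1) + 1 = (n + 1) + i * 2 ^ (K+1) := by ring
  rw [e]
  refine ⟨(Nat.dvd_add_iff_left ?_).1 h.1, fun h' => h.2 ((Nat.dvd_add_iff_left ?_).2 h')⟩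
  · exact Dvd.dvd.mul_left (pow_dvd_pow 2 (by omega)) i
  · exact Dvd.intro_left i rfl

lemma cls_infinite (K : ℕ) : {n | cls n = K}.Infinite := by
  have h0 : cls (2 ^ K - 1) = K := by
    rw [cls_eq_iff, Nat.sub_add_cancel Nat.one_le_two_pow]
    refine ⟨dvd_rfl, fun h => ?_⟩
    have := (Nat.pow_dvd_pow_iff_le_right (by norm_num : 1 < 2)).1 h
    omega
  apply Set.infinite_of_injective_forall_mem (f := fun i : ℕ => 2 ^ K - 1 + i * 2 ^ (K+1))
  · intro a b h
    have : 0 < 2 ^ (K+1) := by positivity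
    simpa using h
  · intro i
    exact cls_shift _ _ _ h0

/-- The weights. -/
noncomputable def ww (n : ℕ) : ℝ := 1 / ((n : ℝ) + 1) ^ 2

lemma ww_pos (n : ℕ) : 0 < ww n := by unfold ww; positivity

lemma ww_summable : Summable ww := by
  have := (summable_nat_add_iff 1).2 (Real.summable_one_div_nat_pow.2 (by norm_num : 1 < 2))
  refine this.congr (fun n => ?_)
  simp [ww]

lemma ww_ratio (K : ℕ) : ∀ ε > 0, ∃ N, ∀ n ≥ N, n ∈ {n | cls n = K} →
    ww n ≤ ε * tailC ww {n | cls n = K} n := by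
  intro ε hε
  set D : ℝ := 1 + 2 ^ (K+1) with hD
  have hD0 : 0 < D := by positivity
  obtain ⟨N, hN⟩ := exists_nat_gt (D ^ 2 / ε)
  refine ⟨N, fun n hn hnC => ?_⟩
  have hle : ((n:ℝ) + 1) * (1 / (((n:ℝ) + 1) * D) ^ 2) ≤ tailC ww {n | cls n = K} n := by
    have hinj : Function.Injective (fun i : ℕ => n + i * 2 ^ (K+1)) := by
      intro a b h
      simpa using h
    have h1 : ∑ i ∈ (Finset.range (n+1)).map ⟨_, hinj⟩,
        ({n | cls n = K} ∩ Set.Ici n).indicator ww i ≤ tailC ww {n | cls n = K} n := by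
      apply (ww_summable.indicator _).sum_le_tsum
      intro i _
      exact Set.indicator_nonneg (fun n _ => (ww_pos n).le) i
    refine le_trans ?_ h1
    rw [Finset.sum_map]
    have h2 : ∀ i ∈ Finset.range (n+1), 1 / (((n:ℝ) + 1) * D) ^ 2 ≤
        ({n | cls n = K} ∩ Set.Ici n).indicator ww (n + i * 2 ^ (K+1)) := by
      intro i hi
      have hi : (i:ℝ) ≤ n := by
        have := Finset.mem_range.1 hi
        exact_mod_cast (by omega : i ≤ n)
      have hmem : n + i * 2 ^ (K+1) ∈ {n | cls n = K} ∩ Set.Ici n :=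
        ⟨cls_shift n i K hnC, Nat.le_add_right _ _⟩
      rw [Set.indicator_of_mem hmem]
      unfold ww
      push_cast
      apply one_div_le_one_div_of_le (by positivity)
      gcongr
      rw [hD]
      have : (i:ℝ) * 2 ^ (K+1) ≤ (n+1) * 2 ^ (K+1) := by gcongr; linarith
      linarith
    have := Finset.card_nsmul_le_sum _ _ _ h2
    simpa using this
  refine le_trans ?_ (mul_le_mul_of_nonneg_left hle hε.le)
  have hn' : D ^ 2 ≤ ε * (n + 1) := by
    rw [div_lt_iff₀ hε] at hN
    have : (N:ℝ) ≤ n := by exact_mod_cast hn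
    nlinarith
  unfold ww
  rw [show ε * (((n:ℝ) + 1) * (1 / (((n:ℝ) + 1) * D) ^ 2)) = (ε * (n+1)) / D ^ 2 * (1 / ((n:ℝ) + 1) ^ 2) by field_simp]
  apply le_mul_of_one_le_left (by positivity)
  rwa [one_le_div (by positivity)]

lemma Gphi_eq (φ : ℕ → ℚ) : Gphi (fun n : ℕ+ => φ n.natPred) = GG ww φ := by
  funext x
  unfold Gphi GG
  rw [← Equiv.pnatEquivNat.tsum_eq]
  apply tsum_congr
  intro n
  simp only [Equiv.pnatEquivNat_apply, Set.indicator, Set.mem_ofPred_eq, ww]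
  have : ((n.natPred : ℕ) : ℝ) + 1 = (n : ℕ) := by exact_mod_cast PNat.natPred_add_one n
  rw [this]

/-- Distance threshold. -/
noncomputable def rr (n : ℕ) : ℝ := ((n : ℝ) + 1) ^ (-(1/2) : ℝ)

noncomputable def vv (n : ℕ) : ℝ := ((n : ℝ) + 1) ^ (-(3/2) : ℝ)

lemma vv_summable : Summable vv := by
  have := (summable_nat_add_iff 1).2 (Real.summable_nat_rpow.2 (by norm_num : (-(3/2) : ℝ) < -1))
  refine this.congr (fun n => ?_)
  simp [vv]

lemma vv_pos (n : ℕ) : 0 < vv n := by unfold vv; positivity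

lemma ww_eq (n : ℕ) : ww n = vv n * rr n := by
  unfold ww vv rr
  rw [← Real.rpow_add (by positivity)]
  norm_num

lemma rr_tendsto : Tendsto rr atTop (𝓝 0) := by
  unfold rr
  exact (tendsto_rpow_neg_atTop (by norm_num)).comp
    (tendsto_atTop_add_const_right _ _ tendsto_natCast_atTop_atTop)

lemma rat_infinite {u v : ℝ} (h : u < v) : {q : ℚ | u < q ∧ (q:ℝ) < v}.Infinite := by
  obtain ⟨p, hp1, hp2⟩ := exists_rat_btwn h
  obtain ⟨r, hr1, hr2⟩ := exists_rat_btwn hp2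
  have : p < r := by exact_mod_cast hr1
  refine (Set.Ioo_infinite this).mono ?_
  rintro q ⟨h1, h2⟩
  have h1 : (p:ℝ) < q := by exact_mod_cast h1
  have h2 : (q:ℝ) < r := by exact_mod_cast h2
  exact ⟨by linarith, by linarith⟩

lemma J_infinite {a b c ξ σ : ℝ} (hab : a < b) (hc : 0 < c) (hσ : σ = 1 ∨ σ = -1) :
    {q : ℚ | a < c * (σ * (q - ξ)) ∧ c * (σ * (q - ξ)) < b}.Infinite := by
  have hab' : a / c < b / c := by gcongr
  rcases hσ with rfl | rfl
  · refine (rat_infinite (u := ξ + a / c) (v := ξ + b / c) (by linarith)).mono ?_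
    rintro q ⟨h1, h2⟩
    have h3 : a / c < q - ξ := by linarith
    have h4 : q - ξ < b / c := by linarith
    rw [div_lt_iff₀ hc] at h3
    rw [lt_div_iff₀ hc] at h4
    exact ⟨by linarith, by linarith⟩
  · refine (rat_infinite (u := ξ - b / c) (v := ξ - a / c) (by linarith)).mono ?_
    rintro q ⟨h1, h2⟩
    have h3 : a / c < ξ - q := by linarith
    have h4 : ξ - q < b / c := by linarith
    rw [div_lt_iff₀ hc] at h3
    rw [lt_div_iff₀ hc] at h4
    exact ⟨by linarith, by linarith⟩

/-- Index of the point attached to a class. -/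
def kk (K : ℕ) : ℕ := (K - 1) / 2

/-- Side attached to a class. -/
noncomputable def sg (K : ℕ) : ℝ := if K % 2 = 1 then 1 else -1

lemma sg_cases (K : ℕ) : sg K = 1 ∨ sg K = -1 := by
  unfold sg; split_ifs <;> simp

lemma sg_abs (K : ℕ) : |sg K| = 1 := by
  rcases sg_cases K with h | h <;> simp [h]

noncomputable def TT (n : ℕ) : ℝ := tailC ww {m | cls m = cls n} n

/-- Target set for index `n`. -/
def JJ (ξ c : ℕ → ℝ) (n : ℕ) : Set ℚ :=
  {q | TT n - ww n < c (kk (cls n)) * (sg (cls n) * (q - ξ (kk (cls n)))) ∧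
    c (kk (cls n)) * (sg (cls n) * (q - ξ (kk (cls n)))) < TT n}

lemma TT_ge (n : ℕ) : ww n ≤ TT n := by
  unfold TT
  rw [tailC_succ ww_summable (show n ∈ {m | cls m = cls n} from rfl)]
  have : 0 ≤ ∑' k, ({m | cls m = cls n} ∩ Set.Ioi n).indicator ww k :=
      tsum_nonneg (fun m => Set.indicator_nonneg (fun n _ => (ww_pos n).le) m)
  linarith

/-- For each class, eventually the target sets are close to the point. -/
lemma JJ_close (ξ c : ℕ → ℝ) (hc : ∀ k, 0 < c k) (K : ℕ) {η : ℝ} (hη : 0 < η) :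
    ∀ᶠ n in atTop, cls n = K → ∀ q ∈ JJ ξ c n, |(q:ℝ) - ξ (kk K)| < η := by
  obtain ⟨N, hN⟩ := tailC_tendsto ww_pos ww_summable (mul_pos (hc (kk K)) hη)
  filter_upwards [eventually_ge_atTop N] with n hn hK q hq
  have h1 : TT n < c (kk K) * η := hN n hn _
  have h0 := TT_ge n
  obtain ⟨h2, h3⟩ := hq
  rw [hK] at h2 h3
  have h4 := lt_of_mul_lt_mul_left (h3.trans h1) (hc _).le
  have h5 : 0 < sg K * (q - ξ (kk K)) := pos_of_mul_pos_right (by linarith) (hc (kk K)).le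
  rw [← abs_of_pos h5, abs_mul, sg_abs, one_mul] at h4
  exact h4

theorem stmt6 (ξ : ℕ → ℝ) (hξ : ∀ k, Irrational (ξ k)) (hinj : Function.Injective ξ)
    (c : ℕ → ℝ) (hc : ∀ k, 0 < c k) :
    ∃ φ : ℕ+ → ℚ, Function.Bijective φ ∧
      ∀ k, HasDerivAt (Gphi φ) (c k) (ξ k) := by
  classical
  let good : ℕ → Prop := fun n => cls n ≠ 0 ∧
    ∀ q ∈ JJ ξ c n, ∀ i < kk (cls n), rr n ≤ |(q:ℝ) - ξ i|
  let I : ℕ → Set ℚ := fun n => if good n then JJ ξ c n else Set.Ioi (n : ℚ)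
  have hI : ∀ n, (I n).Infinite := by
    intro n
    by_cases h : good n
    · simp only [I, if_pos h]
      exact J_infinite (by linarith [ww_pos n]) (hc _) (sg_cases _)
    · simp only [I, if_neg h]
      exact Set.Ioi_infinite _
  have habs : ∀ (q : ℚ) k, 0 < |(q:ℝ) - ξ k| := fun q k =>
    abs_pos.2 (sub_ne_zero.2 ((hξ k).ne_rat q).symm)
  let adm : ℕ → ℚ → Prop := fun n q => ∀ k ∈ Set.Iic (Encodable.encode q), rr n ≤ |(q:ℝ) - ξ k|
  have hadm : ∀ q, ∀ᶠ n in atTop, adm n q := by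
    intro q
    simp only [adm]
    rw [Filter.eventually_all_finite (Set.finite_Iic _)]
    intro k _
    exact rr_tendsto.eventually_le_const (habs q k)
  obtain ⟨φ, hφ, hφI⟩ := exists_bij I hI {n | cls n = 0} (cls_infinite 0) adm hadm
  refine ⟨fun n => φ n.natPred, hφ.comp Equiv.pnatEquivNat.bijective, ?_⟩
  rw [Gphi_eq]
  intro k
  -- distances between the points
  have hdist : ∀ i j, i ≠ j → 0 < |ξ i - ξ j| := fun i j h =>
    abs_pos.2 (sub_ne_zero.2 (hinj.ne h))
  -- for fixed class, far from the other points
  have hfar : ∀ K i, i ≠ kk K → ∀ᶠ n in atTop, cls n = K → ∀ q ∈ JJ ξ c n, rr n ≤ |(q:ℝ) - ξ i| := by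
    intro K i hi
    have hd := hdist i (kk K) hi
    filter_upwards [JJ_close ξ c hc K (half_pos hd),
      rr_tendsto.eventually_le_const (half_pos hd)] with n h1 h2 hK q hq
    have h3 := h1 hK q hq
    have h4 : |ξ i - ξ (kk K)| ≤ |(q:ℝ) - ξ i| + |(q:ℝ) - ξ (kk K)| := by
      rw [abs_sub_comm (q:ℝ) (ξ i)]
      exact abs_sub_le _ _ _
    linarith
  -- for a fixed class eventually in target
  have hin : ∀ K, K ≠ 0 → ∀ᶠ n in atTop, cls n = K → φ n ∈ JJ ξ c n := by
    intro K hK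
    have : ∀ᶠ n in atTop, ∀ i ∈ Set.Iio (kk K), cls n = K → ∀ q ∈ JJ ξ c n, rr n ≤ |(q:ℝ) - ξ i| := by
      rw [Filter.eventually_all_finite (Set.finite_Iio _)]
      intro i hi
      exact hfar K i (ne_of_lt hi)
    filter_upwards [this] with n hn hnK
    have hg : good n := ⟨by rw [hnK]; exact hK, fun q hq i hi => hn i (by rw [hnK] at hi; exact hi) hnK q hq⟩
    rcases hφI n with h | h
    · simpa only [I, if_pos hg] using h
    · exact absurd h.1 hg.1
  -- main separation property
  have hsep : ∀ᶠ n in atTop, (cls n ≠ 0 ∧ kk (cls n) = k) ∨ rr n ≤ |(φ n : ℝ) - ξ k| := by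
    have e1 : ∀ᶠ n in atTop, k ≤ Encodable.encode (φ n) := by
      have : Tendsto (fun n => Encodable.encode (φ n)) atTop atTop := by
        rw [← Nat.cofinite_eq_atTop]
        exact (Encodable.encode_injective.comp hφ.1).tendsto_cofinite
      exact this.eventually_ge_atTop k
    have e2 : ∀ᶠ n : ℕ in atTop, ξ k + 1 ≤ n :=
      tendsto_natCast_atTop_atTop.eventually_ge_atTop _
    have e3 : ∀ᶠ n : ℕ in atTop, rr n ≤ 1 := rr_tendsto.eventually_le_const one_pos
    have e4 : ∀ᶠ n in atTop, ∀ K ∈ Set.Iio (2 * k + 1), K ≠ 0 → cls n = K →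
        ∀ q ∈ JJ ξ c n, rr n ≤ |(q:ℝ) - ξ k| := by
      rw [Filter.eventually_all_finite (Set.finite_Iio _)]
      intro K hK
      by_cases h0 : K = 0
      · exact Eventually.of_forall fun n h => absurd h0 h
      · filter_upwards [hfar K k (by have : K < 2 * k + 1 := hK
                                     unfold kk; omega)] with n hn _ using hn
    filter_upwards [e1, e2, e3, e4] with n h1 h2 h3 h4
    rcases hφI n with h | h
    · by_cases hg : good n
      · simp only [I, if_pos hg] at h
        by_cases hk : kk (cls n) = k
        · exact Or.inl ⟨hg.1, hk⟩
        · right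
          rcases lt_or_gt_of_ne hk with hlt | hgt
          · exact h4 (cls n) (by show cls n < 2 * k + 1
                                 unfold kk at hlt; omega) hg.1 rfl _ h
          · exact hg.2 _ h k hgt
      · simp only [I, if_neg hg] at h
        right
        have h : (n:ℝ) < φ n := by exact_mod_cast h
        rw [abs_of_pos (by linarith)]
        linarith
    · exact Or.inr (h.2 k h1)
  -- one sided estimate
  have key : ∀ K, K ≠ 0 → kk K = k → ∀ ε > 0, ∃ δ > 0, ∀ h, 0 < h → h < δ → ∀ B : Set ℕ,
      (∀ n ∈ B, 0 < sg K * (φ n - ξ k) ∧ sg K * (φ n - ξ k) ≤ h) →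
      (∀ n, 0 < sg K * (φ n - ξ k) → sg K * (φ n - ξ k) < h → n ∈ B) →
        |∑' n, B.indicator ww n - c k * h| ≤ ε * h := by
    intro K hK hKk ε hε
    refine lemC ww_pos ww_summable (cls_infinite K) (ww_ratio K) (fun n => sg K * (φ n - ξ k))
      (hc k) ?_ vv vv_summable ?_ hε
    · obtain ⟨N, hN⟩ := eventually_atTop.1 (hin K hK)
      refine ⟨N, fun n hn hnK => ?_⟩
      have hnK : cls n = K := hnK
      have := hN n hn hnK
      simpa only [JJ, TT, hnK, hKk, Set.mem_ofPred_eq] using this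
    · -- opposite class
      have hopp : ∀ᶠ n in atTop, ∀ L ∈ Set.Iio (2 * k + 3), L ≠ 0 → cls n = L → φ n ∈ JJ ξ c n := by
        rw [Filter.eventually_all_finite (Set.finite_Iio _)]
        intro L _
        by_cases h0 : L = 0
        · exact Eventually.of_forall fun n h => absurd h0 h
        · filter_upwards [hin L h0] with n hn _ using hn
      filter_upwards [hsep, hopp] with n h1 h2 hnK hpos
      have hnK : cls n ≠ K := hnK
      rcases h1 with ⟨h3, h4⟩ | h1
      · exfalso
        have h5 := (h2 (cls n) (by show cls n < 2 * k + 3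
                                   unfold kk at h4; omega) h3 rfl).1
        have hs : sg (cls n) = - sg K := by
          unfold kk at h4 hKk
          unfold sg
          by_cases hp : K % 2 = 1
          · rw [if_pos hp, if_neg (by omega)]
          · rw [if_neg hp, if_pos (by omega)]; norm_num
        rw [h4, hs] at h5
        have h6 := mul_pos (hc k) hpos
        have h7 := TT_ge n
        linarith
      · rw [ww_eq]
        have := vv_pos n
        gcongr
        rwa [← abs_of_pos hpos, abs_mul, sg_abs, one_mul]
  apply deriv_of ww_summable φ (hξ k)
  rintro σ (rfl | rfl)
  · have h := key (2 * k + 1) (by omega) (by unfold kk; omega)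
    have hs : sg (2 * k + 1) = 1 := by unfold sg; rw [if_pos (by omega)]
    rwa [hs] at h
  · have h := key (2 * k + 2) (by omega) (by unfold kk; omega)
    have hs : sg (2 * k + 2) = -1 := by unfold sg; rw [if_neg (by omega)]
    rwa [hs] at h
end

section
/- For every countable set A ⊆ ℝ and every function g : A → (0, ∞), there exists a strictly increasing function f : ℝ → ℝ such that f is differentiable at each x ∈ A with f'(x) = g(x), and f'(x) = 0 for almost every x ∈ ℝ. -/
open Filter Topology MeasureTheory

/-- Quadratic closeness implies a derivative. -/
theorem hasDerivAt_of_quad (f : ℝ → ℝ) (d x C δ : ℝ) (hδ : 0 < δ)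
    (h : ∀ y, |y - x| < δ → |f y - f x - (y - x) * d| ≤ C * (y - x) ^ 2) :
    HasDerivAt f d x := by
  rw [hasDerivAt_iff_isLittleO]
  have h1 : (fun y => f y - f x - (y - x) • d) =O[𝓝 x] fun y => (y - x) ^ 2 := by
    apply Asymptotics.IsBigO.of_bound C
    filter_upwards [Metric.ball_mem_nhds x hδ] with y hy
    have := h y (by simpa [Real.dist_eq] using hy)
    simpa [Real.norm_eq_abs] using this
  refine h1.trans_isLittleO ?_
  have h2 := Asymptotics.isLittleO_pow_sub_sub x (show 1 < 2 by norm_num)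
  simpa [Real.norm_eq_abs, sq_abs] using h2

theorem step_aux (c : ℝ) (hc : 0 < c) {s t : ℝ} (hs : -c ≤ s) (hst : s ≤ t) (ht : t ≤ c) :
    c / (⌊c / s⌋ : ℝ) ≤ c / (⌊c / t⌋ : ℝ) := by
  have hneg : ∀ u : ℝ, u < 0 → (⌊c / u⌋ : ℝ) < 0 := fun u hu =>
    lt_of_le_of_lt (Int.floor_le _) (div_neg_of_pos_of_neg hc hu)
  have hpos : ∀ u : ℝ, 0 < u → u ≤ c → (0 : ℝ) < (⌊c / u⌋ : ℝ) := by
    intro u hu huc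
    have : (1 : ℤ) ≤ ⌊c / u⌋ := Int.le_floor.2 (by rw [le_div_iff₀ hu]; simpa using huc)
    exact_mod_cast (by omega : (0 : ℤ) < ⌊c / u⌋)
  rcases lt_trichotomy s 0 with h | h | h
  · rcases lt_trichotomy t 0 with h' | h' | h'
    · have : (⌊c / t⌋ : ℝ) ≤ ⌊c / s⌋ := by
        have : c / t ≤ c / s := by
          rw [div_eq_mul_inv, div_eq_mul_inv]
          exact mul_le_mul_of_nonneg_left ((inv_le_inv_of_neg h' h).2 hst) hc.le
        exact_mod_cast Int.floor_le_floor this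
      rw [div_eq_mul_inv, div_eq_mul_inv]
      exact mul_le_mul_of_nonneg_left ((inv_le_inv_of_neg (hneg s h) (hneg t h')).2 this) hc.le
    · subst h'
      simpa using (div_neg_of_pos_of_neg hc (hneg s h)).le
    · exact (div_neg_of_pos_of_neg hc (hneg s h)).le.trans (div_pos hc (hpos t h' ht)).le
  · subst h
    rcases hst.eq_or_lt with h' | h'
    · subst h'; exact le_rfl
    · simpa using (div_pos hc (hpos t h' ht)).le
  · have ht0 := h.trans_le hst
    have : (⌊c / t⌋ : ℝ) ≤ ⌊c / s⌋ := by
      exact_mod_cast Int.floor_le_floor (div_le_div_of_nonneg_left hc.le h hst)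
    exact div_le_div_of_nonneg_left hc.le (hpos t ht0 ht) this

theorem step_exists (D : Set ℝ) (hD : D.Countable) (γ ε : ℝ) (hγ : 0 < γ) (hε : 0 < ε) :
    ∃ h : ℝ → ℝ, Monotone h ∧ HasDerivAt h γ 0 ∧ (∀ x ∈ D, x ≠ 0 → HasDerivAt h 0 x) ∧
      {x | ¬ HasDerivAt h 0 x}.Countable ∧ (∀ x, |h x| ≤ ε) ∧ (∀ x, ε ≤ x → h x = h ε) ∧
      (∀ x, x ≤ -ε → h x = h (-ε)) := by
  -- choose c
  have hB : (⋃ k : ℤ, (fun x : ℝ => (k : ℝ) * x) '' D).Countable :=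
    Set.countable_iUnion fun k => hD.image _
  obtain ⟨c, hcB, hc0, hc1⟩ : ∃ c, c ∉ (⋃ k : ℤ, (fun x : ℝ => (k : ℝ) * x) '' D) ∧
      0 < c ∧ c < min ε (ε / γ) := by
    obtain ⟨c, hc, hc'⟩ := (hB.dense_compl ℝ).exists_between
      (show (0 : ℝ) < min ε (ε / γ) by positivity)
    exact ⟨c, hc, hc'.1, hc'.2⟩
  have hcε : c < ε := hc1.trans_le (min_le_left _ _)
  have hcγ : γ * c ≤ ε := by
    have := (hc1.trans_le (min_le_right _ _)).le
    rw [le_div_iff₀ hγ] at this; linarith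
  set cl : ℝ → ℝ := fun x => max (-c) (min c x) with hcl
  have hcl1 : ∀ x, -c ≤ cl x := fun x => le_max_left _ _
  have hcl2 : ∀ x, cl x ≤ c := fun x => max_le (by linarith) (min_le_left _ _)
  have hclm : Monotone cl := fun x y hxy => max_le_max le_rfl (min_le_min le_rfl hxy)
  have hclpos : ∀ x, c ≤ x → cl x = c := fun x hx => by
    simp only [hcl]; rw [min_eq_left hx, max_eq_right (by linarith)]
  have hclneg : ∀ x, x ≤ -c → cl x = -c := fun x hx => by
    simp only [hcl]; rw [min_eq_right (by linarith), max_eq_left hx]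
  have hclid : ∀ x, |x| ≤ c → cl x = x := fun x hx => by
    rw [abs_le] at hx
    simp only [hcl]; rw [min_eq_right hx.2, max_eq_right hx.1]
  set h : ℝ → ℝ := fun x => γ * (c / (⌊c / cl x⌋ : ℝ)) with hh
  have hmono : Monotone h := fun x y hxy =>
    mul_le_mul_of_nonneg_left (step_aux c hc0 (hcl1 x) (hclm hxy) (hcl2 y)) hγ.le
  have hvc : h c = γ * c := by
    simp only [hh]; rw [hclpos c le_rfl, div_self hc0.ne']; simp
  have hvnc : h (-c) = -(γ * c) := by
    simp only [hh]; rw [hclneg _ le_rfl, div_neg, div_self hc0.ne']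
    have : ⌊(-1 : ℝ)⌋ = -1 := by exact_mod_cast Int.floor_intCast (-1 : ℤ) (R := ℝ)
    rw [this]; push_cast; ring
  have hup : ∀ x, c ≤ x → h x = γ * c := fun x hx => by
    rw [← hvc]; simp only [hh]; rw [hclpos x hx, hclpos c le_rfl]
  have hdn : ∀ x, x ≤ -c → h x = -(γ * c) := fun x hx => by
    rw [← hvnc]; simp only [hh]; rw [hclneg x hx, hclneg (-c) le_rfl]
  have hloc : ∀ x, x ≠ 0 → (∀ k : ℤ, c ≠ k * x) → HasDerivAt h 0 x := by
    intro x hx hk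
    have hev : h =ᶠ[𝓝 x] fun _ => h x := by
      rcases lt_or_ge c x with h1 | h1
      · filter_upwards [lt_mem_nhds h1] with y hy
        rw [hup y hy.le, hup x h1.le]
      rcases lt_or_ge x (-c) with h2 | h2
      · filter_upwards [gt_mem_nhds h2] with y hy
        rw [hdn y hy.le, hdn x h2.le]
      have h1' : x < c := lt_of_le_of_ne h1 (fun e => hk 1 (by simp [e]))
      have h2' : -c < x := lt_of_le_of_ne h2 (fun e => hk (-1) (by simp [← e]))
      have hlt1 : (⌊c / x⌋ : ℝ) < c / x := lt_of_le_of_ne (Int.floor_le _) (fun e => by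
        apply hk ⌊c / x⌋; rw [e]; field_simp)
      have hlt2 : c / x < ⌊c / x⌋ + 1 := Int.lt_floor_add_one _
      have hcont : ContinuousAt (fun y => c / y) x := continuousAt_const.div continuousAt_id hx
      filter_upwards [lt_mem_nhds h2', gt_mem_nhds h1', hcont.eventually (lt_mem_nhds hlt1),
        hcont.eventually (gt_mem_nhds hlt2)] with y a1 a2 a3 a4
      simp only [hh]
      rw [hclid y (abs_le.2 ⟨a1.le, a2.le⟩), hclid x (abs_le.2 ⟨h2, h1⟩)]
      have : ⌊c / y⌋ = ⌊c / x⌋ := Int.floor_eq_iff.2 ⟨a3.le, a4⟩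
      rw [this]
    exact (hasDerivAt_const x (h x)).congr_of_eventuallyEq hev
  have hbd : ∀ x, |h x| ≤ γ * c := by
    intro x
    rw [abs_le]
    constructor
    · rcases le_total x (-c) with hx | hx
      · rw [hdn x hx]
      · rw [← hvnc]; exact hmono hx
    · rcases le_total c x with hx | hx
      · rw [hup x hx]
      · rw [← hvc]; exact hmono hx
  refine ⟨h, hmono, ?_, ?_, ?_, fun x => (hbd x).trans hcγ, ?_, ?_⟩
  · apply hasDerivAt_of_quad h γ 0 (γ * (2 / c)) (c / 2) (by positivity)
    intro t ht
    rw [sub_zero] at *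
    have h0 : h 0 = 0 := by
      simp only [hh]; rw [hclid 0 (by simpa using hc0.le)]; simp
    rw [h0, sub_zero]
    simp only [hh]
    rw [hclid t (by linarith)]
    rcases eq_or_ne t 0 with h | hne
    · subst h; simp
    have htp : 0 < |t| := abs_pos.2 hne
    set n : ℝ := (⌊c / t⌋ : ℝ) with hn
    have e1 : n ≤ c / t := Int.floor_le _
    have e2 : c / t < n + 1 := Int.lt_floor_add_one _
    have e3 : |c / t - n| ≤ 1 := by rw [abs_le]; constructor <;> linarith
    have e4 : c / |t| = |c / t| := by rw [abs_div, abs_of_pos hc0]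
    have e5 : 2 ≤ c / |t| := by rw [le_div_iff₀ htp]; linarith
    have e6 : c / |t| ≤ |n| + 1 := by
      rw [e4]
      have := abs_add_le (c / t - n) n
      rw [sub_add_cancel] at this; linarith
    have e7 : c / (2 * |t|) ≤ |n| := by
      have : c / (2 * |t|) = (c / |t|) / 2 := by field_simp
      rw [this]; linarith
    have hnp : 0 < |n| := lt_of_lt_of_le (by positivity) e7
    have hn0 : n ≠ 0 := abs_pos.1 hnp
    have e8 : γ * (c / n) - t * γ = γ * ((c / t - n) * t / n) := by field_simp
    rw [e8, abs_mul, abs_of_pos hγ, mul_assoc]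
    apply mul_le_mul_of_nonneg_left _ hγ.le
    rw [abs_div, abs_mul, div_le_iff₀ hnp, ← sq_abs t]
    calc |c / t - n| * |t| ≤ 1 * |t| := by gcongr
      _ = 2 / c * |t| ^ 2 * (c / (2 * |t|)) := by field_simp
      _ ≤ _ := by gcongr
  · intro x hx hx0
    apply hloc x hx0
    intro k hk
    exact hcB (Set.mem_iUnion.2 ⟨k, x, hx, hk.symm⟩)
  · apply ((Set.countable_singleton (0 : ℝ)).union
      (Set.countable_range (fun k : ℤ => c / (k : ℝ)))).mono
    intro x hx
    by_contra hcon
    simp only [Set.mem_union, Set.mem_singleton_iff, Set.mem_range, not_or, not_exists] at hcon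
    refine hx (hloc x hcon.1 fun k hk => hcon.2 k ?_)
    have : (k : ℝ) ≠ 0 := by
      intro h0; rw [h0] at hk; simp at hk; exact hc0.ne' hk
    rw [hk]; field_simp
  · intro x hx; rw [hup x (by linarith), hup ε hcε.le]
  · intro x hx; rw [hdn x (by linarith), hdn (-ε) (by linarith)]

theorem main_seq (a : ℕ → ℝ) (ha : Function.Injective a) (g : ℕ → ℝ) (hg : ∀ n, 0 < g n) :
    ∃ f : ℝ → ℝ, Monotone f ∧ (∀ n, HasDerivAt f (g n) (a n)) ∧
      ∀ᵐ x : ℝ, HasDerivAt f 0 x := by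
  have hs : ∀ n, ∃ s : ℝ, 0 < s ∧ s ≤ (1 / 2) ^ n ∧ ∀ m < n, s ≤ |a m - a n| := by
    intro n
    have hev : ∀ᶠ s in 𝓝[>] (0 : ℝ), 0 < s ∧ s ≤ (1 / 2) ^ n ∧
        ∀ m ∈ Finset.range n, s ≤ |a m - a n| := by
      refine (eventually_mem_nhdsWithin).and (Eventually.and ?_ ?_)
      · exact eventually_nhdsWithin_of_eventually_nhds (ge_mem_nhds (by positivity))
      · rw [Filter.eventually_all_finset]
        intro m hm
        refine eventually_nhdsWithin_of_eventually_nhds (ge_mem_nhds (abs_pos.2 (sub_ne_zero.2 ?_)))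
        exact fun e => (Finset.mem_range.1 hm).ne (ha e)
    obtain ⟨s, h1, h2, h3⟩ := hev.exists
    exact ⟨s, h1, h2, fun m hm => h3 m (Finset.mem_range.2 hm)⟩
  choose s hs0 hs1 hs2 using hs
  have hp1 : ∀ n : ℕ, ((1 : ℝ) / 2) ^ n ≤ 1 := fun n => pow_le_one₀ (by norm_num) (by norm_num)
  have hstep := fun n => step_exists (Set.range fun m => a m - a n) (Set.countable_range _) (g n)
    ((1 / 2) ^ n * s n ^ 2 / 8) (hg n) (by have := hs0 n; positivity)
  choose h hmono hd0 hdD hcount hbd hup hdn using hstep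
  have hεs : ∀ n, (1 / 2) ^ n * s n ^ 2 / 8 ≤ s n / 2 := by
    intro n
    have h1 := hs0 n
    have h2 := (hs1 n).trans (hp1 n)
    have h3 : (1 / 2) ^ n * s n ^ 2 ≤ 1 * s n ^ 2 := by gcongr; exact hp1 n
    nlinarith
  have hε1 : ∀ n, (1 / 2) ^ n * s n ^ 2 / 8 ≤ (1 / 2) ^ n := by
    intro n
    have h1 := hs0 n
    have h2 := (hs1 n).trans (hp1 n)
    have h3 : (1 / 2) ^ n * s n ^ 2 ≤ (1 / 2) ^ n * 1 := by gcongr; nlinarith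
    have : (0 : ℝ) < (1 / 2) ^ n := by positivity
    nlinarith
  have hgeo : Summable fun n : ℕ => ((1 : ℝ) / 2) ^ n := summable_geometric_two
  have hsum : ∀ x, Summable fun n => h n (x - a n) := fun x =>
    Summable.of_norm_bounded hgeo fun n => (hbd n _).trans (hε1 n)
  have hquad : ∀ n x y, s n ≤ |x - a n| →
      |h n (y - a n) - h n (x - a n)| ≤ (1 / 2) ^ n * (y - x) ^ 2 := by
    intro n x y hx
    have hq : (0 : ℝ) ≤ (1 / 2) ^ n * (y - x) ^ 2 := by positivity
    rcases lt_or_ge |y - x| (s n / 2) with hlt | hge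
    · have : h n (y - a n) = h n (x - a n) := by
        rw [abs_lt] at hlt
        have := hεs n
        have := hs0 n
        rcases le_abs.1 hx with hx | hx
        · rw [hup n (y - a n) (by linarith), hup n (x - a n) (by linarith)]
        · rw [hdn n (y - a n) (by linarith), hdn n (x - a n) (by linarith)]
      rw [this]; simpa using hq
    · have b1 := hbd n (y - a n)
      have b2 := hbd n (x - a n)
      have b3 := abs_sub (h n (y - a n)) (h n (x - a n))
      have b4 : (s n / 2) ^ 2 ≤ (y - x) ^ 2 := by
        rw [← sq_abs (y - x)]
        have := hs0 n
        gcongr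
      have b5 : (1 / 2 : ℝ) ^ n * (s n / 2) ^ 2 ≤ (1 / 2) ^ n * (y - x) ^ 2 := by gcongr
      nlinarith
  have hder : ∀ (x : ℝ) (N : ℕ) (d : ℕ → ℝ), (∀ n, N ≤ n → s n ≤ |x - a n|) →
      (∀ n < N, HasDerivAt (fun y => h n (y - a n)) (d n) x) →
      HasDerivAt (fun y => ∑' n, h n (y - a n)) (∑ n ∈ Finset.range N, d n) x := by
    intro x N d hN hd
    have e : (fun y => ∑' n, h n (y - a n)) = fun y =>
        (∑ n ∈ Finset.range N, h n (y - a n)) + ∑' n, h (n + N) (y - a (n + N)) := by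
      funext y
      exact ((hsum y).sum_add_tsum_nat_add N).symm
    rw [e]
    have h1 : HasDerivAt (fun y => ∑ n ∈ Finset.range N, h n (y - a n))
        (∑ n ∈ Finset.range N, d n) x :=
      HasDerivAt.fun_sum fun n hn => hd n (Finset.mem_range.1 hn)
    have h2 : HasDerivAt (fun y => ∑' n, h (n + N) (y - a (n + N))) 0 x := by
      apply hasDerivAt_of_quad _ 0 x (∑' n : ℕ, (1 / 2 : ℝ) ^ (n + N)) 1 one_pos
      intro y _
      have s1 := (summable_nat_add_iff N).2 (hsum y)
      have s2 := (summable_nat_add_iff N).2 (hsum x)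
      have s3 := (summable_nat_add_iff N).2 hgeo
      rw [mul_zero, sub_zero, ← s1.tsum_sub s2, ← tsum_mul_right]
      rw [← Real.norm_eq_abs]
      refine tsum_of_norm_bounded (s3.mul_right ((y - x) ^ 2)).hasSum fun n => ?_
      exact hquad (n + N) x y (hN _ (Nat.le_add_left _ _))
    have h3 := h1.fun_add h2
    rw [add_zero] at h3
    exact h3
  refine ⟨fun y => ∑' n, h n (y - a n), ?_, ?_, ?_⟩
  · intro x y hxy
    exact (hsum x).tsum_le_tsum (fun n => hmono n (by linarith)) (hsum y)
  · intro m
    have := hder (a m) (m + 1) (fun n => if n = m then g m else 0)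
      (fun n hn => hs2 n m (by omega)) ?_
    · simpa using this
    · intro n _
      split_ifs with hnm
      · subst hnm
        have := hd0 n
        rw [← sub_self (a n)] at this
        exact this.comp_sub_const (a n) (a n)
      · refine (hdD n (a m - a n) ⟨m, rfl⟩ (sub_ne_zero.2 fun e => hnm (ha e.symm))).comp_sub_const
          (a m) (a n)
  · have hc : ∀ᵐ x : ℝ, ∀ n, HasDerivAt (h n) 0 (x - a n) := by
      rw [ae_all_iff]
      intro n
      have : ({x | ¬ HasDerivAt (h n) 0 (x - a n)} : Set ℝ).Countable :=
        (hcount n).preimage (sub_left_injective (b := a n))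
      exact this.measure_zero volume
    have hbc : ∀ᵐ x : ℝ, ∀ᶠ n in atTop, x ∉ Metric.ball (a n) (s n) := by
      apply ae_eventually_notMem
      have hss : Summable fun n => 2 * s n :=
        (Summable.of_nonneg_of_le (fun n => (hs0 n).le) hs1 hgeo).mul_left 2
      simp only [Real.volume_ball]
      exact hss.tsum_ofReal_ne_top
    filter_upwards [hc, hbc] with x h1 h2
    obtain ⟨N, hN⟩ := eventually_atTop.1 h2
    have := hder x N (fun _ => 0) (fun n hn => by
      have := hN n hn
      rw [Metric.mem_ball, Real.dist_eq, not_lt] at this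
      exact this) (fun n _ => (h1 n).comp_sub_const x (a n))
    simpa using this

theorem stmt7 (A : Set ℝ) (hA : A.Countable) (g : ℝ → ℝ) (hg : ∀ x ∈ A, 0 < g x) :
    ∃ f : ℝ → ℝ, StrictMono f ∧ (∀ x ∈ A, HasDerivAt f (g x) x) ∧
      ∀ᵐ x : ℝ ∂MeasureTheory.volume, HasDerivAt f 0 x := by
  classical
  set B : Set ℝ := A ∪ Set.range ((↑) : ℚ → ℝ) with hB
  have hBc : B.Countable := hA.union (Set.countable_range _)
  have hBi : B.Infinite :=
    (Set.infinite_range_of_injective Rat.cast_injective).mono Set.subset_union_right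
  have := hBc.to_subtype
  have := hBi.to_subtype
  obtain ⟨e⟩ := nonempty_equiv_of_countable (α := ℕ) (β := B)
  set G : ℝ → ℝ := fun x => if x ∈ A then g x else 1 with hG
  have hGp : ∀ x, 0 < G x := by
    intro x; simp only [hG]; split_ifs with hx
    · exact hg x hx
    · exact one_pos
  obtain ⟨f, hm, hd, hae⟩ := main_seq (fun n => (e n : ℝ))
    (Subtype.val_injective.comp e.injective) (fun n => G (e n)) (fun n => hGp _)
  have hdB : ∀ x ∈ B, HasDerivAt f (G x) x := by
    intro x hx
    have := hd (e.symm ⟨x, hx⟩)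
    simpa using this
  refine ⟨f, ?_, ?_, hae⟩
  · intro x y hxy
    refine lt_of_le_of_ne (hm hxy.le) fun heq => ?_
    obtain ⟨q, hq1, hq2⟩ := exists_rat_btwn hxy
    have h1 := hdB q (Or.inr ⟨q, rfl⟩)
    have hev : f =ᶠ[𝓝 (q : ℝ)] fun _ => f x := by
      filter_upwards [lt_mem_nhds hq1, gt_mem_nhds hq2] with z z1 z2
      exact le_antisymm (heq ▸ hm z2.le) (hm z1.le)
    have h2 := (hasDerivAt_const (q : ℝ) (f x)).congr_of_eventuallyEq hev
    exact (hGp q).ne' (h1.unique h2)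
  · intro x hx
    have := hdB x (Or.inl hx)
    simpa [hG, hx] using this
end

section
/- For any increasing function G : ℝ → ℝ, any real ξ, any c ∈ ℝ, and any strictly decreasing sequence (x_m) of positive reals tending to 0 with lim_{m→∞} x_{m+1}/x_m = 1: if lim_{m→∞} (G(ξ+x_m) − G(ξ))/x_m = c and lim_{m→∞} (G(ξ) − G(ξ−x_m))/x_m = c, then G is differentiable at ξ with G'(ξ) = c. -/
open Filter in
theorem aux_right (F : ℝ → ℝ) (hF : Monotone F) (h0 : F 0 = 0) (c : ℝ) (x : ℕ → ℝ)
    (hpos : ∀ m, 0 < x m)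
    (hlim : Tendsto x atTop (nhds 0))
    (hratio : Tendsto (fun m => x (m + 1) / x m) atTop (nhds 1))
    (hq : Tendsto (fun m => F (x m) / x m) atTop (nhds c)) :
    Tendsto (fun h => F h / h) (nhdsWithin 0 (Set.Ioi 0)) (nhds c) := by
  have hlow : Tendsto (fun m => F (x (m + 1)) / x m) atTop (nhds c) := by
    have h := ((tendsto_add_atTop_iff_nat 1).2 hq).mul hratio
    rw [mul_one] at h
    refine h.congr fun m => ?_
    have := (hpos m).ne'
    have := (hpos (m + 1)).ne'
    field_simp
  have hup : Tendsto (fun m => F (x m) / x (m + 1)) atTop (nhds c) := by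
    have h := hq.div hratio one_ne_zero
    rw [div_one] at h
    refine h.congr fun m => ?_
    have := (hpos m).ne'
    have := (hpos (m + 1)).ne'
    simp only [Pi.div_apply]
    field_simp
  rw [tendsto_order]
  have key : ∀ N : ℕ, ∀ h : ℝ, 0 < h → h < x N → ∃ m, N ≤ m ∧
      F (x (m + 1)) / x m ≤ F h / h ∧ F h / h ≤ F (x m) / x (m + 1) := by
    intro N h hh hN
    have hex : ∃ k, x (N + k) < h := by
      obtain ⟨k, hk⟩ := ((hlim.eventually_lt_const hh).and (eventually_ge_atTop N)).exists
      exact ⟨k - N, by rw [Nat.add_sub_cancel' hk.2]; exact hk.1⟩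
    classical
    have h1 := Nat.find_spec hex
    have h2 := fun j => Nat.find_min (H := hex) (m := j)
    generalize Nat.find hex = k at h1 h2
    cases k with
    | zero => exact absurd h1 (by simpa using hN.le)
    | succ j =>
      have h3 := not_lt.1 (h2 j (Nat.lt_succ_self j))
      rw [← Nat.add_assoc] at h1
      have p1 := hpos (N + j)
      have p2 := hpos (N + j + 1)
      refine ⟨N + j, Nat.le_add_right _ _, ?_, ?_⟩
      · exact div_le_div₀ (h0 ▸ hF hh.le) (hF h1.le) hh h3
      · exact div_le_div₀ (h0 ▸ hF p1.le) (hF h3) p2 h1.le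
  constructor
  · intro a ha
    obtain ⟨N, hN⟩ := eventually_atTop.1 (hlow.eventually_const_lt ha)
    filter_upwards [Ioo_mem_nhdsGT (hpos N)] with h hh
    obtain ⟨m, hm, h1, -⟩ := key N h hh.1 hh.2
    exact (hN m hm).trans_le h1
  · intro a ha
    obtain ⟨N, hN⟩ := eventually_atTop.1 (hup.eventually_lt_const ha)
    filter_upwards [Ioo_mem_nhdsGT (hpos N)] with h hh
    obtain ⟨m, hm, -, h1⟩ := key N h hh.1 hh.2
    exact h1.trans_lt (hN m hm)

open Filter in
theorem stmt12 (G : ℝ → ℝ) (hG : Monotone G) (ξ c : ℝ) (x : ℕ → ℝ)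
    (hpos : ∀ m, 0 < x m) (hanti : StrictAnti x)
    (hlim : Tendsto x atTop (nhds 0))
    (hratio : Tendsto (fun m => x (m + 1) / x m) atTop (nhds 1))
    (hright : Tendsto (fun m => (G (ξ + x m) - G ξ) / x m) atTop (nhds c))
    (hleft : Tendsto (fun m => (G ξ - G (ξ - x m)) / x m) atTop (nhds c)) :
    HasDerivAt G c ξ := by
  have hr := aux_right (fun h => G (ξ + h) - G ξ)
    (fun a b hab => sub_le_sub_right (hG (by linarith)) _) (by simp) c x hpos hlim hratio hright
  have hl := aux_right (fun h => G ξ - G (ξ - h))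
    (fun a b hab => sub_le_sub_left (hG (by linarith)) _) (by simp) c x hpos hlim hratio hleft
  rw [hasDerivAt_iff_tendsto_slope_zero, ← Set.Iio_union_Ioi, nhdsWithin_union, tendsto_sup]
  constructor
  · have hn : Tendsto (fun t : ℝ => -t) (nhdsWithin 0 (Set.Iio 0)) (nhdsWithin 0 (Set.Ioi 0)) := by
      simpa using tendsto_neg_nhdsLT (a := (0 : ℝ))
    refine (hl.comp hn).congr fun t => ?_
    simp only [Function.comp, smul_eq_mul, sub_neg_eq_add, div_eq_mul_inv, inv_neg]
    ring
  · refine hr.congr fun t => ?_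
    simp only [smul_eq_mul, div_eq_mul_inv]
    ring
end

section
/- There exists a bijection φ : ℕ → ℚ such that for no real ξ does one have 0 < G_φ'(ξ) < ∞; i.e., membership of G_φ in the class of singular functions with a positive finite derivative somewhere depends on the choice of the enumeration φ. -/
open Filter Topology

lemma aux_summable : Summable (fun n : ℕ+ => 1 / ((n : ℕ) : ℝ) ^ 2) := by
  have h : Summable (fun n : ℕ => 1 / (n : ℝ) ^ 2) :=
    Real.summable_one_div_nat_pow.2 (by norm_num)
  exact h.comp_injective PNat.coe_injective

lemma aux_tail (ε : ℝ) (hε : 0 < ε) : ∃ N : ℕ, ∀ t : Set ℕ+, (∀ n ∈ t, N ≤ (n : ℕ)) →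
    ∑' n : ℕ+, t.indicator (fun n : ℕ+ => 1 / ((n : ℕ) : ℝ) ^ 2) n < ε := by
  obtain ⟨s, hs⟩ := aux_summable.tsum_vanishing (Iio_mem_nhds hε)
  refine ⟨∑ i ∈ s, (i : ℕ) + 1, fun t ht => ?_⟩
  rw [← tsum_subtype]
  refine hs t (Set.disjoint_left.2 fun n hn hns => ?_)
  have h1 := ht n hn
  have h2 : (n : ℕ) ≤ ∑ i ∈ s, (i : ℕ) :=
    Finset.single_le_sum (f := fun i : ℕ+ => (i : ℕ)) (fun _ _ => Nat.zero_le _)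
      (Finset.mem_coe.1 hns)
  omega

lemma aux_diff (φ : ℕ+ → ℚ) (a b : ℝ) (hab : a ≤ b) :
    Gphi φ b - Gphi φ a = ∑' n : ℕ+, {n : ℕ+ | a ≤ (φ n : ℝ) ∧ (φ n : ℝ) < b}.indicator
      (fun n : ℕ+ => 1 / ((n : ℕ) : ℝ) ^ 2) n := by
  have key : ∀ x : ℝ, Summable (fun n : ℕ+ => if (φ n : ℝ) < x then 1 / ((n : ℕ) : ℝ) ^ 2 else 0) := by
    intro x
    refine Summable.of_nonneg_of_le (fun n => ?_) (fun n => ?_) aux_summable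
    · split_ifs <;> positivity
    · split_ifs
      · exact le_rfl
      · positivity
  unfold Gphi
  rw [← (key b).tsum_sub (key a)]
  refine tsum_congr fun n => ?_
  simp only [Set.indicator, Set.mem_ofPred_eq]
  by_cases h1 : (φ n : ℝ) < a
  · have h2 : (φ n : ℝ) < b := h1.trans_le hab
    simp [h1, h2]
  · simp [h1, not_lt.1 h1]

lemma aux_spacing (r : ℕ → ℚ) (hr : Function.Injective r) (k : ℕ) :
    ∃ h : ℝ, 0 < h ∧ h ≤ 1 / ((k : ℝ) + 1) ∧
      ∀ i ≤ k, ∀ j ≤ k, i ≠ j → 2 * h < |(r i : ℝ) - r j| := by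
  have h1 : ∀ᶠ h : ℝ in 𝓝[>] 0, ∀ i ∈ Finset.range (k+1), ∀ j ∈ Finset.range (k+1),
      i ≠ j → 2 * h < |(r i : ℝ) - r j| := by
    rw [Filter.eventually_all_finset]
    intro i _
    rw [Filter.eventually_all_finset]
    intro j _
    by_cases hij : i = j
    · exact Eventually.of_forall fun _ h => absurd hij h
    · have hp : 0 < |(r i : ℝ) - r j| := by
        rw [abs_pos, sub_ne_zero]
        exact fun h => hij (hr (by exact_mod_cast h))
      have : ∀ᶠ h : ℝ in 𝓝[>] 0, h < |(r i : ℝ) - r j| / 2 :=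
        nhdsWithin_le_nhds (Iio_mem_nhds (by positivity))
      filter_upwards [this] with h hh _
      linarith
  have h2 : ∀ᶠ h : ℝ in 𝓝[>] 0, h < 1 / ((k : ℝ) + 1) :=
    nhdsWithin_le_nhds (Iio_mem_nhds (by positivity))
  have h3 : ∀ᶠ h : ℝ in 𝓝[>] 0, 0 < h := self_mem_nhdsWithin
  obtain ⟨h, a, b, c⟩ := (h1.and (h2.and h3)).exists
  exact ⟨h, c, b.le, fun i hi j hj => a i (by simp; omega) j (by simp; omega)⟩

lemma aux_int (ξ : ℝ) : ∃ δ > 0, ∀ z : ℤ, |(z : ℝ) - ξ| < δ → (z : ℝ) = ξ := by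
  by_cases hξ : ∃ m : ℤ, (m : ℝ) = ξ
  · obtain ⟨m, rfl⟩ := hξ
    refine ⟨1, one_pos, fun z hz => ?_⟩
    have : |z - m| < 1 := by exact_mod_cast hz
    rw [Int.abs_lt_one_iff] at this
    have : z = m := by omega
    rw [this]
  · have h1 : (⌊ξ⌋ : ℝ) < ξ := lt_of_le_of_ne (Int.floor_le ξ) fun h => hξ ⟨_, h⟩
    have h2 := Int.lt_floor_add_one ξ
    refine ⟨min (ξ - ⌊ξ⌋) (⌊ξ⌋ + 1 - ξ), lt_min (by linarith) (by linarith), fun z hz => ?_⟩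
    exfalso
    obtain ⟨ha, hb⟩ := lt_min_iff.1 hz
    rw [abs_lt] at ha hb
    have h3 : (⌊ξ⌋ : ℝ) < z := by linarith
    have h4 : (z : ℝ) < ⌊ξ⌋ + 1 := by linarith
    have h5 : ⌊ξ⌋ < z := by exact_mod_cast h3
    have h6 : z < ⌊ξ⌋ + 1 := by exact_mod_cast h4
    omega

lemma aux_bij (n : ℕ → ℕ+) (hn : Function.Injective n) (hc : (Set.range n)ᶜ.Infinite)
    (r : ℕ → ℚ) (hr : Function.Injective r) (hrr : (Set.range r)ᶜ.Infinite) :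
    ∃ φ : ℕ+ → ℚ, Function.Bijective φ ∧ (∀ m, m ∉ Set.range n → φ m ∉ Set.range r) ∧
      ∀ k, φ (n k) = r k := by
  classical
  have := hc.to_subtype
  have := hrr.to_subtype
  obtain ⟨e⟩ := nonempty_equiv_of_countable (α := ↥(Set.range n)ᶜ) (β := ↥(Set.range r)ᶜ)
  let f : Set.range n ≃ Set.range r :=
    (Equiv.ofInjective n hn).symm.trans (Equiv.ofInjective r hr)
  let E : ℕ+ ≃ ℚ := (Equiv.Set.sumCompl (Set.range n)).symm.trans
    ((Equiv.sumCongr f e).trans (Equiv.Set.sumCompl (Set.range r)))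
  refine ⟨E, E.bijective, fun m hm => ?_, fun k => ?_⟩
  · have : E m = e ⟨m, hm⟩ := by
      simp [E, Equiv.Set.sumCompl_symm_apply_of_notMem hm]
    rw [this]
    exact (e ⟨m, hm⟩).2
  · have hk : n k ∈ Set.range n := ⟨k, rfl⟩
    simp [E, Equiv.Set.sumCompl_symm_apply_of_mem hk, f]

theorem stmt18 :
    ∃ φ : ℕ+ → ℚ, Function.Bijective φ ∧
      ¬ ∃ (ξ d : ℝ), 0 < d ∧ HasDerivAt (Gphi φ) d ξ := by
  -- enumerate the non-integer rationals
  have hinf : (Set.range ((↑) : ℤ → ℚ))ᶜ.Infinite := by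
    refine Set.infinite_of_injective_forall_mem (f := fun z : ℤ => (z : ℚ) + 1 / 2) ?_ ?_
    · intro a b hab
      simpa using hab
    · rintro z ⟨w, hw⟩
      have h : ((2 * w : ℤ) : ℚ) = ((2 * z + 1 : ℤ) : ℚ) := by
        push_cast
        linarith
      have h' : 2 * w = 2 * z + 1 := by exact_mod_cast h
      omega
  have := hinf.to_subtype
  obtain ⟨e⟩ := nonempty_equiv_of_countable (α := ℕ) (β := ↥(Set.range ((↑) : ℤ → ℚ))ᶜ)
  let r : ℕ → ℚ := fun k => (e k : ℚ)
  have hr : Function.Injective r := Subtype.val_injective.comp e.injective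
  have hrange : ∀ q : ℚ, q ∉ Set.range r → ∃ z : ℤ, (z : ℚ) = q := by
    intro q hq
    by_contra hcon
    exact hq ⟨e.symm ⟨q, hcon⟩, by simp [r]⟩
  have hrr : (Set.range r)ᶜ.Infinite := by
    refine Set.infinite_of_injective_forall_mem (f := fun z : ℤ => (z : ℚ)) Int.cast_injective ?_
    rintro z ⟨k, hk⟩
    exact (e k).2 ⟨z, hk.symm⟩
  choose h hpos hle hsep using aux_spacing r hr
  have hεpos : ∀ k : ℕ, 0 < h k / ((k : ℝ) + 1) := fun k => div_pos (hpos k) (by positivity)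
  choose N hN using fun k : ℕ => aux_tail _ (hεpos k)
  let n : ℕ → ℕ+ := fun j => ⟨2 * (j + 1 + ∑ i ∈ Finset.range j, N i), by positivity⟩
  have hnv : ∀ j, (n j : ℕ) = 2 * (j + 1 + ∑ i ∈ Finset.range j, N i) := fun j => rfl
  have hmono : StrictMono n := by
    refine strictMono_nat_of_lt_succ fun j => ?_
    rw [← PNat.coe_lt_coe, hnv, hnv, Finset.sum_range_succ]
    omega
  have hbig : ∀ k j, k < j → N k ≤ (n j : ℕ) := by
    intro k j hkj
    have := Finset.single_le_sum (f := N) (fun _ _ => Nat.zero_le _) (Finset.mem_range.2 hkj)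
    rw [hnv]
    omega
  have hc : (Set.range n)ᶜ.Infinite := by
    refine Set.infinite_of_injective_forall_mem
      (f := fun k : ℕ => (⟨2 * k + 1, by omega⟩ : ℕ+)) ?_ ?_
    · intro a b hab
      have : 2 * a + 1 = 2 * b + 1 := congrArg PNat.val hab
      omega
    · rintro k ⟨j, hj⟩
      have : (n j : ℕ) = 2 * k + 1 := congrArg PNat.val hj
      rw [hnv] at this
      omega
  obtain ⟨φ, hφ, hφ1, hφ2⟩ := aux_bij n hmono.injective hc r hr hrr
  refine ⟨φ, hφ, ?_⟩
  rintro ⟨ξ, d, hd, hder⟩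
  obtain ⟨δ, hδ, hint⟩ := aux_int ξ
  have hlo := (hasDerivAt_iff_isLittleO.1 hder).def (c := d / 8) (by positivity)
  obtain ⟨δ', hδ', hlo⟩ := Metric.eventually_nhds_iff.1 hlo
  obtain ⟨k, hk⟩ := exists_nat_one_div_lt (lt_min hδ (lt_min hδ' (show 0 < d / 8 by positivity)))
  rw [lt_min_iff, lt_min_iff] at hk
  obtain ⟨hk1, hk2, hk3⟩ := hk
  have hh := hpos k
  have hhk := hle k
  -- the mass of a free interval is small
  have hfree : ∀ a b : ℝ, a ≤ b → (∀ x, a ≤ x → x < b → |x - ξ| < δ ∧ x ≠ ξ) →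
      (∀ i ≤ k, ¬ (a ≤ (r i : ℝ) ∧ (r i : ℝ) < b)) → Gphi φ b - Gphi φ a < h k * (d / 8) := by
    intro a b hab hnear hno
    rw [aux_diff φ a b hab]
    have h1 : h k / ((k : ℝ) + 1) ≤ h k * (d / 8) := by
      rw [div_eq_mul_one_div]
      exact mul_le_mul_of_nonneg_left hk3.le hh.le
    refine (hN k _ fun m hm => ?_).trans_le h1
    by_cases hmr : m ∈ Set.range n
    · obtain ⟨j, rfl⟩ := hmr
      apply hbig
      by_contra hjk
      refine hno j (by omega) ?_
      have := hm
      simp only [Set.mem_ofPred_eq, hφ2] at this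
      exact this
    · exfalso
      obtain ⟨z, hz⟩ := hrange _ (hφ1 m hmr)
      have hz' : (φ m : ℝ) = (z : ℝ) := by rw [← hz]; simp
      obtain ⟨hm1, hm2⟩ := hm
      rw [hz'] at hm1 hm2
      obtain ⟨h2, h3⟩ := hnear _ hm1 hm2
      exact h3 (hint z h2)
  have hval : ∀ t : ℝ, |t| ≤ h k → |Gphi φ (ξ + t) - Gphi φ ξ - t * d| ≤ d / 8 * |t| := by
    intro t ht
    have := hlo (y := ξ + t) (by rw [Real.dist_eq]; simp only [add_sub_cancel_left]; linarith)
    simpa [Real.norm_eq_abs] using this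
  have v1 := hval (h k) (by rw [abs_of_pos hh])
  have v2 := hval (h k / 2) (by rw [abs_of_pos (by positivity)]; linarith)
  have v3 := hval (-h k) (by rw [abs_neg, abs_of_pos hh])
  have v4 := hval (-(h k / 2)) (by rw [abs_neg, abs_of_pos (by positivity)]; linarith)
  rw [abs_of_pos hh] at v1
  rw [abs_of_pos (show 0 < h k / 2 by positivity)] at v2
  rw [abs_neg, abs_of_pos hh] at v3
  rw [abs_neg, abs_of_pos (show 0 < h k / 2 by positivity)] at v4
  rw [abs_le] at v1 v2 v3 v4
  have hdh : 0 < d * h k := by positivity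
  by_cases hR : ∃ i ≤ k, ξ + h k / 2 ≤ (r i : ℝ) ∧ (r i : ℝ) < ξ + h k
  · obtain ⟨i, hik, hi1, hi2⟩ := hR
    have := hfree (ξ + -h k) (ξ + -(h k / 2)) (by linarith) (fun x h1 h2 =>
      ⟨by rw [abs_lt]; constructor <;> linarith, by intro h; linarith⟩) (by
        rintro j hjk ⟨hj1, hj2⟩
        have hij : i ≠ j := by
          rintro rfl
          linarith
        have := hsep k i hik j hjk hij
        rw [abs_of_pos (by linarith)] at this
        linarith)
    nlinarith
  · push Not at hR
    have := hfree (ξ + h k / 2) (ξ + h k) (by linarith) (fun x h1 h2 =>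
      ⟨by rw [abs_lt]; constructor <;> linarith, by intro h; linarith⟩) (by
        rintro j hjk ⟨hj1, hj2⟩
        exact absurd hj2 (not_lt.2 (hR j hjk hj1)))
    nlinarith
end
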